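/- For s ∈ [1,2] let P_s ⊆ ℝ² be the pentagon P_s = conv{(0, s/2), ((2s−1)/(2√3), −1/2), (−(2s−1)/(2√3), −1/2), ((2s−1)/(2√3), (−s²+s+1)/2), (−(2s−1)/(2√3), (−s²+s+1)/2)}. Then P_s is a Minkowski centered convex body with s(P_s) = s and τ(P_s) = min{1, s/(s²−1)} (with the convention that for s = 1 this minimum equals 1). -/

import Mathlib

open scoped Pointwise RealInnerProductSpace
open Set

noncomputable section

abbrev E2 := EuclideanSpace ℝ (Fin 2)

/-- A convex body: compact convex set with nonempty interior. -/
def IsConvexBody (K : Set E2) : Prop :=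
  Convex ℝ K ∧ IsCompact K ∧ (interior K).Nonempty

/-- circumradius `R(K,C)` -/
def circum (K C : Set E2) : ℝ :=
  sInf {ρ : ℝ | 0 < ρ ∧ ∃ t : E2, K ⊆ ρ • C + {t}}

/-- inradius `r(K,C)` -/
def inrad (K C : Set E2) : ℝ :=
  sSup {ρ : ℝ | 0 < ρ ∧ ∃ t : E2, ρ • C + {t} ⊆ K}

/-- width `w(K,C)` -/
def widthB (K C : Set E2) : ℝ := 2 * inrad (K - K) (C - C)

/-- diameter `D(K,C)` -/
def diamB (K C : Set E2) : ℝ := 2 * circum (K - K) (C - C)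

/-- Minkowski asymmetry `s(K)` -/
def minkAsym (K : Set E2) : ℝ :=
  sInf {ρ : ℝ | 0 < ρ ∧ ∃ c : E2, K - {c} ⊆ ρ • ({c} - K)}

/-- `K` is Minkowski centered -/
def MinkCentered (K : Set E2) : Prop := K ⊆ minkAsym K • (-K)

/-- `τ(K)`: smallest `ρ > 0` with `K ∩ (-K) ⊆ ρ • ((K-K)/2)` -/
def tauB (K : Set E2) : ℝ :=
  sInf {ρ : ℝ | 0 < ρ ∧ K ∩ (-K) ⊆ ρ • ((2:ℝ)⁻¹ • (K - K))}

/-- golden ratio -/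
def phiR : ℝ := (1 + Real.sqrt 5) / 2

def cExpr2 (s : ℝ) : ℝ :=
  (s^2+1)^2 / ((s^2-1) * (s^2+2*s-1+2*Real.sqrt (s*(s^2-1))))

def cExpr3 (s : ℝ) : ℝ := 2*(s^2-2*s-1) / ((s-3)*(s+1))

/-- `ŝ`: the unique `s ∈ (φ,2)` where the two expressions agree. -/
def sHat : ℝ := sInf {s : ℝ | phiR < s ∧ s < 2 ∧ cExpr2 s = cExpr3 s}

def cFun (s : ℝ) : ℝ :=
  if s ≤ phiR then 1 else if s ≤ sHat then cExpr2 s else cExpr3 s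

/-- polar body -/
def polarBody (K : Set E2) : Set E2 := {y | ∀ x ∈ K, (inner ℝ x y : ℝ) ≤ 1}

/-- `γ(K)` -/
def gammaB (K : Set E2) : ℝ :=
  sInf {ρ : ℝ | 0 < ρ ∧
    polarBody ((2:ℝ)⁻¹ • (polarBody K - polarBody K)) ⊆ ρ • convexHull ℝ (K ∪ -K)}

/-- positive hull of two points -/
def posHull2 (a b : E2) : Set E2 := {x | ∃ α β : ℝ, 0 ≤ α ∧ 0 ≤ β ∧ x = α • a + β • b}

/-- asymmetry point of `K`: a point of `bd(K) ∩ bd(−(1/s(K))·K)` -/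
def IsAsymPoint (K : Set E2) (p : E2) : Prop :=
  p ∈ frontier K ∧ p ∈ frontier ((-(minkAsym K)⁻¹) • K)

/-- a well-spread triple of asymmetry points -/
def WellSpread (K : Set E2) (p1 p2 p3 : E2) : Prop :=
  IsAsymPoint K p1 ∧ IsAsymPoint K p2 ∧ IsAsymPoint K p3 ∧
  ∃ a1 a2 a3 : E2, a1 ≠ 0 ∧ a2 ≠ 0 ∧ a3 ≠ 0 ∧
    (∀ x ∈ K, (inner ℝ a1 x : ℝ) ≤ inner ℝ a1 p1) ∧
    (∀ x ∈ K, (inner ℝ a2 x : ℝ) ≤ inner ℝ a2 p2) ∧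
    (∀ x ∈ K, (inner ℝ a3 x : ℝ) ≤ inner ℝ a3 p3) ∧
    (0:E2) ∈ interior (convexHull ℝ {p1, p2, p3}) ∧
    (0:E2) ∈ convexHull ℝ {a1, a2, a3}

/-- two points of `bd(K) ∩ bd(-K)` are consecutive -/
def Consecutive (K : Set E2) (z1 z2 : E2) : Prop :=
  ¬ ∃ z, z ∈ frontier K ∩ frontier (-K) ∧ z ∈ interior (posHull2 z1 z2)

/-- point of the plane from coordinates -/
def pt (x y : ℝ) : E2 := (WithLp.equiv 2 (Fin 2 → ℝ)).symm ![x, y]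

/-- the golden house -/
def goldenHouse : Set E2 :=
  convexHull ℝ {pt 1 0, pt (-1) 0, pt 1 (-1), pt (-1) (-1), pt 0 phiR}

/-!
Write `P` for the pentagon stretched horizontally to an arbitrary half-width `a`; all the quantities
involved are affine invariants, so the value of `a` is irrelevant. Checking the facet inequalities
gives `P ⊆ -sP`. Three vertices of `P`, the apex and the two ends of the base, touch the boundary of
`-sP`, and outer normals of `-sP` at these points can be scaled to sum to zero, so no translate of a
smaller copy of `-P` contains `P`.

Every edge of `(P - P) / 2` is parallel to an edge of `P` or `-P`, so its facet inequalities can be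
compared with those of `P ∩ -P`. The horizontal extent decides: `P ∩ -P` reaches out to
`a * min 1 (s / (s ^ 2 - 1))` on the horizontal axis, and `(P - P) / 2` to `a`.
-/

section Certificates

variable {E : Type*} [AddCommGroup E] [Module ℝ E]

-- The translation `c` drops out on summing over `i`, because the functionals sum to zero.
lemma sum_apply_le_mul_sum_of_sub_subset {ι : Type*} [Fintype ι] {K : Set E} {c : E} {ρ : ℝ}
    (hρ : 0 ≤ ρ) (hK : K - {c} ⊆ ρ • ({c} - K)) {f : ι → Module.Dual ℝ E} (hf : ∑ i, f i = 0)
    {p : ι → E} (hp : ∀ i, p i ∈ K) {m : ι → ℝ} (hm : ∀ i, ∀ x ∈ K, -m i ≤ f i x) :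
    ∑ i, f i (p i) ≤ ρ * ∑ i, m i := by
  have hfc : ∑ i, f i c = 0 := by rw [← LinearMap.sum_apply, hf, LinearMap.zero_apply]
  have apply_le (i : ι) : f i (p i) ≤ ρ * m i + (1 + ρ) * f i c := by
    obtain ⟨_, ⟨c', hc', v, hv, rfl⟩, hpv⟩ := hK (sub_mem_sub (hp i) (mem_singleton c))
    obtain rfl : c = c' := hc'.symm
    have hfpv : ρ * (f i c - f i v) = f i (p i) - f i c := by
      simpa only [map_smul, map_sub, smul_eq_mul] using congrArg (f i) hpv
    linarith [mul_le_mul_of_nonneg_left (hm i v hv) hρ]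
  calc ∑ i, f i (p i) ≤ ∑ i, (ρ * m i + (1 + ρ) * f i c) := Finset.sum_le_sum fun i _ ↦ apply_le i
    _ = ρ * ∑ i, m i := by
      rw [Finset.sum_add_distrib, ← Finset.mul_sum, ← Finset.mul_sum, hfc, mul_zero, add_zero]

lemma inter_neg_subset_half_sub (K : Set E) : K ∩ -K ⊆ (2 : ℝ)⁻¹ • (K - K) := fun z hz ↦
  ⟨z - -z, sub_mem_sub hz.1 hz.2, by module⟩

lemma apply_le_mul_of_mem_smul_half_sub {K : Set E} {z : E} {ρ : ℝ} (hρ : 0 ≤ ρ)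
    (hz : z ∈ ρ • ((2 : ℝ)⁻¹ • (K - K))) {f : Module.Dual ℝ E} {w : ℝ}
    (hf : ∀ x ∈ K, |f x| ≤ w) : f z ≤ ρ * w := by
  obtain ⟨_, ⟨_, ⟨x, hx, y, hy, rfl⟩, rfl⟩, rfl⟩ := hz
  simp only [map_smul, map_sub, smul_eq_mul]
  gcongr
  linarith [(abs_le.1 (hf x hx)).2, (abs_le.1 (hf y hy)).1]

end Certificates

theorem minkAsym_eq_of_touching {ι : Type*} [Fintype ι] {K : Set E2} {s : ℝ} (hs : 0 < s)
    (hK : K ⊆ s • (-K)) {f : ι → Module.Dual ℝ E2} (hf : ∑ i, f i = 0)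
    {p : ι → E2} (hp : ∀ i, p i ∈ K) {m : ι → ℝ} (hm : ∀ i, ∀ x ∈ K, -m i ≤ f i x)
    (htouch : ∀ i, f i (p i) = s * m i) (hpos : 0 < ∑ i, m i) : minkAsym K = s := by
  refine IsLeast.csInf_eq ⟨⟨hs, 0, by simpa using hK⟩, ?_⟩
  rintro ρ ⟨hρ, c, hc⟩
  refine le_of_mul_le_mul_right ?_ hpos
  calc s * ∑ i, m i = ∑ i, f i (p i) := by simp only [htouch, Finset.mul_sum]
    _ ≤ ρ * ∑ i, m i := sum_apply_le_mul_sum_of_sub_subset hρ.le hc hf hp hm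

theorem tauB_eq_of_touching {K : Set E2} {τ : ℝ} (hτ : 0 < τ)
    (hK : K ∩ -K ⊆ τ • ((2 : ℝ)⁻¹ • (K - K))) {z : E2} (hz : z ∈ K ∩ -K)
    {f : Module.Dual ℝ E2} {w : ℝ} (hw : 0 < w) (hf : ∀ x ∈ K, |f x| ≤ w) (htouch : f z = τ * w) :
    tauB K = τ := by
  refine IsLeast.csInf_eq ⟨⟨hτ, hK⟩, ?_⟩
  rintro ρ ⟨hρ, hρK⟩
  refine le_of_mul_le_mul_right ?_ hw
  rw [← htouch]
  exact apply_le_mul_of_mem_smul_half_sub hρ.le (hρK hz) hf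

@[simp] lemma pt_apply_zero (x y : ℝ) : pt x y 0 = x := by simp [pt]

@[simp] lemma pt_apply_one (x y : ℝ) : pt x y 1 = y := by simp [pt]

lemma plane_ext {z w : E2} (h₀ : z 0 = w 0) (h₁ : z 1 = w 1) : z = w := by
  ext i
  fin_cases i
  exacts [h₀, h₁]

lemma pt_mem_of_mem_Icc {K : Set E2} (hK : Convex ℝ K) {x y y₁ y₂ : ℝ} (h₁ : pt x y₁ ∈ K)
    (h₂ : pt x y₂ ∈ K) (hy : y ∈ Icc y₁ y₂) : pt x y ∈ K := by
  have hconv : Convex ℝ {y | pt x y ∈ K} := by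
    intro y₁ h₁ y₂ h₂ α β hα hβ hαβ
    have hcomb : pt x (α • y₁ + β • y₂) = α • pt x y₁ + β • pt x y₂ := by
      apply plane_ext <;> simp [← add_mul, hαβ]
    simpa only [mem_ofPred_eq, hcomb] using hK h₁ h₂ hα hβ hαβ
  exact hconv.ordConnected.out h₁ h₂ hy

lemma exists_abs_sub_le_and_abs_le_max {r : ℝ} (hr : 0 ≤ r) (x : ℝ) :
    ∃ v, |v - x| ≤ r ∧ |v| ≤ max 0 (|x| - r) := by
  rcases le_total |x| r with hx | hx
  · exact ⟨0, by simpa using hx, by simp⟩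
  · rcases abs_cases x with ⟨habs, -⟩ | ⟨habs, -⟩ <;> rw [habs] at hx ⊢
    · exact ⟨x - r, by simp [abs_of_nonneg hr], by simp [abs_of_nonneg (sub_nonneg.2 hx)]⟩
    · refine ⟨x + r, by simp [abs_of_nonneg hr], le_max_of_le_right ?_⟩
      rw [abs_of_nonpos (by linarith)]
      linarith

section House

/-- The house with half-width `a`, base at height `b`, walls up to height `t` and apex at height
`h`, symmetric about the vertical axis: the shape of both the golden house and the pentagons `P_s`.
All the heights are coordinates, so a base below the origin has `b < 0`. -/
def house (a b t h : ℝ) : Set E2 :=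
  convexHull ℝ {pt 0 h, pt a b, pt (-a) b, pt a t, pt (-a) t}

variable {a b t h : ℝ}

lemma convex_house : Convex ℝ (house a b t h) := convex_convexHull ℝ _

lemma house_subset (ha : 0 < a) (hbt : b ≤ t) (hth : t ≤ h) :
    house a b t h ⊆ {z | |z 0| ≤ a ∧ b ≤ z 1 ∧ a * z 1 + (h - t) * |z 0| ≤ a * h} := by
  have habs : ConvexOn ℝ univ fun z : E2 ↦ |z 0| :=
    (convexOn_univ_norm (E := ℝ)).comp_linearMap
      (EuclideanSpace.proj (𝕜 := ℝ) (0 : Fin 2) : E2 →L[ℝ] ℝ).toLinearMap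
  have hlin : IsLinearMap ℝ fun z : E2 ↦ z 1 := ⟨fun _ _ ↦ rfl, fun _ _ ↦ rfl⟩
  have hwalls : Convex ℝ {z : E2 | |z 0| ≤ a} := by simpa using habs.convex_le a
  have hbase : Convex ℝ {z : E2 | b ≤ z 1} := convex_halfSpace_ge hlin b
  have hroof : Convex ℝ {z : E2 | a * z 1 + (h - t) * |z 0| ≤ a * h} := by
    simpa using (((hlin.mk' _).convexOn convex_univ).smul ha.le |>.add
      (habs.smul (sub_nonneg.2 hth))).convex_le (a * h)
  refine convexHull_min ?_ (hwalls.inter (hbase.inter hroof))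
  rintro z (rfl | rfl | rfl | rfl | rfl) <;>
    simp only [mem_ofPred_eq, pt_apply_zero, pt_apply_one, abs_zero, abs_neg, abs_of_pos ha] <;>
    refine ⟨?_, ?_, ?_⟩ <;> nlinarith

lemma pt_base_mem_house (ha : 0 < a) {x : ℝ} (hx : |x| ≤ a) : pt x b ∈ house a b t h := by
  obtain ⟨hx₁, hx₂⟩ := abs_le.1 hx
  have hleft : pt (-a) b ∈ house a b t h := subset_convexHull ℝ _ (by simp)
  have hright : pt a b ∈ house a b t h := subset_convexHull ℝ _ (by simp)
  have hcomb : pt x b = ((a - x) / (2 * a)) • pt (-a) b + ((a + x) / (2 * a)) • pt a b := by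
    apply plane_ext <;> simp <;> field_simp <;> ring
  rw [hcomb]
  exact convex_house hleft hright (div_nonneg (by linarith) (by linarith))
    (div_nonneg (by linarith) (by linarith)) (by field_simp; ring)

lemma pt_roof_mem_house (ha : 0 < a) {x : ℝ} (hx : |x| ≤ a) :
    pt x (h - (h - t) * |x| / a) ∈ house a b t h := by
  have hapex : pt 0 h ∈ house a b t h := subset_convexHull ℝ _ (by simp)
  have combination_mem (v : ℝ) (hv : pt v t ∈ house a b t h) :
      (1 - |x| / a) • pt 0 h + (|x| / a) • pt v t ∈ house a b t h :=
    convex_house hapex hv (sub_nonneg.2 ((div_le_one ha).2 hx)) (by positivity) (by ring)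
  rcases abs_cases x with ⟨habs, -⟩ | ⟨habs, -⟩
  · convert combination_mem a (subset_convexHull ℝ _ (by simp)) using 1
    apply plane_ext <;> simp [habs] <;> field_simp; ring
  · convert combination_mem (-a) (subset_convexHull ℝ _ (by simp)) using 1
    apply plane_ext <;> simp [habs] <;> field_simp; ring

lemma mem_house (ha : 0 < a) (hbt : b ≤ t) (hth : t ≤ h) {z : E2} :
    z ∈ house a b t h ↔ |z 0| ≤ a ∧ b ≤ z 1 ∧ a * z 1 + (h - t) * |z 0| ≤ a * h := by
  refine ⟨fun hz ↦ house_subset ha hbt hth hz, ?_⟩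
  rintro ⟨hwalls, hbase, hroof⟩
  have hz : z = pt (z 0) (z 1) := plane_ext (by simp) (by simp)
  have hz_le : z 1 ≤ h - (h - t) * |z 0| / a := by
    rw [le_sub_comm, div_le_iff₀ ha]
    linarith
  rw [hz]
  exact pt_mem_of_mem_Icc convex_house (pt_base_mem_house ha hwalls) (pt_roof_mem_house ha hwalls)
    ⟨hbase, hz_le⟩

lemma isConvexBody_house (ha : 0 < a) (hbt : b ≤ t) (hth : t ≤ h) (hbh : b < h) :
    IsConvexBody (house a b t h) := by
  have hopen : IsOpen {z : E2 | |z 0| < a ∧ b < z 1 ∧ a * z 1 + (h - t) * |z 0| < a * h} :=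
    (isOpen_lt (f := fun z : E2 ↦ |z 0|) (by fun_prop) continuous_const).and
      ((isOpen_lt continuous_const (by fun_prop)).and (isOpen_lt (by fun_prop) continuous_const))
  refine ⟨convex_house, (toFinite _).isCompact_convexHull ℝ, pt 0 ((b + h) / 2), ?_⟩
  refine interior_maximal (fun z hz ↦ ?_) hopen ⟨?_, ?_, ?_⟩
  · exact (mem_house ha hbt hth).2 ⟨hz.1.le, hz.2.1.le, hz.2.2.le⟩
  · simpa using ha
  · rw [pt_apply_one]
    linarith
  · rw [pt_apply_zero, pt_apply_one, abs_zero, mul_zero, add_zero]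
    gcongr
    linarith

lemma abs_le_of_mem_house_inter_neg (ha : 0 < a) (hbt : b ≤ t) (hth : t ≤ h) {z : E2}
    (hz : z ∈ house a b t h ∩ -house a b t h) :
    |z 0| ≤ a ∧ |z 1| ≤ -b ∧ a * |z 1| + (h - t) * |z 0| ≤ a * h := by
  obtain ⟨hwalls, hbase, hroof⟩ := (mem_house ha hbt hth).1 hz.1
  obtain ⟨-, hbase', hroof'⟩ := (mem_house ha hbt hth).1 (mem_neg.1 hz.2)
  simp only [PiLp.neg_apply, abs_neg] at hbase' hroof'
  refine ⟨hwalls, abs_le.2 ⟨by linarith, by linarith⟩, ?_⟩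
  rcases abs_choice (z 1) with habs | habs <;> rwa [habs]

-- Write `2 • z = v - w` with `w` on the base and `v` as close to the vertical axis as possible.
lemma mem_half_sub_house_of_nonneg (ha : 0 < a) (hbt : b ≤ t) (hth : t ≤ h) {z : E2}
    (hz : 0 ≤ z 1) (hwalls : |z 0| ≤ a) (hapex : z 1 ≤ (h - b) / 2)
    (hroof : a * z 1 + (h - t) * |z 0| ≤ a * ((2 * h - t - b) / 2)) :
    z ∈ (2 : ℝ)⁻¹ • (house a b t h - house a b t h) := by
  obtain ⟨v, hva, hv⟩ := exists_abs_sub_le_and_abs_le_max ha.le (2 * z 0)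
  rw [abs_mul, abs_two] at hv
  have hv_le : |v| ≤ a := hv.trans (max_le ha.le (by linarith))
  have hv_roof : a * (2 * z 1 + b) + (h - t) * |v| ≤ a * h := by
    have hmul := mul_le_mul_of_nonneg_left hv (sub_nonneg.2 hth)
    rcases max_cases 0 (2 * |z 0| - a) with ⟨hmax, -⟩ | ⟨hmax, -⟩ <;> rw [hmax] at hmul
    · linarith [mul_le_mul_of_nonneg_left hapex ha.le]
    · linarith
  have hv_mem : pt v (2 * z 1 + b) ∈ house a b t h :=
    (mem_house ha hbt hth).2 ⟨by simpa using hv_le, by simpa using hz, by simpa using hv_roof⟩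
  refine ⟨_, sub_mem_sub hv_mem (pt_base_mem_house ha hva), ?_⟩
  apply plane_ext <;> simp

lemma mem_half_sub_house (ha : 0 < a) (hbt : b ≤ t) (hth : t ≤ h) {z : E2}
    (hwalls : |z 0| ≤ a) (hapex : |z 1| ≤ (h - b) / 2)
    (hroof : a * |z 1| + (h - t) * |z 0| ≤ a * ((2 * h - t - b) / 2)) :
    z ∈ (2 : ℝ)⁻¹ • (house a b t h - house a b t h) := by
  rcases abs_cases (z 1) with ⟨habs, hz⟩ | ⟨habs, hz⟩ <;> rw [habs] at hapex hroof
  · exact mem_half_sub_house_of_nonneg ha hbt hth hz hwalls hapex hroof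
  · have hneg : -z ∈ (2 : ℝ)⁻¹ • (house a b t h - house a b t h) :=
      mem_half_sub_house_of_nonneg ha hbt hth (by simpa using hz.le) (by simpa using hwalls)
        hapex (by simpa using hroof)
    rwa [← mem_neg, ← smul_set_neg, neg_sub] at hneg

end House

section Pentagon

/-- The pentagon `P_s` with its half-width `(2 * s - 1) / (2 * √3)` replaced by a parameter `a`. -/
def pentagon (a s : ℝ) : Set E2 := house a (-1 / 2) ((-s ^ 2 + s + 1) / 2) (s / 2)

variable {a s : ℝ}

lemma pentagon_base_le_wall (hs1 : 1 ≤ s) (hs2 : s ≤ 2) : -1 / 2 ≤ (-s ^ 2 + s + 1) / 2 := by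
  nlinarith

lemma pentagon_wall_le_apex (hs1 : 1 ≤ s) : (-s ^ 2 + s + 1) / 2 ≤ s / 2 := by
  nlinarith

lemma mem_pentagon (ha : 0 < a) (hs1 : 1 ≤ s) (hs2 : s ≤ 2) {z : E2} :
    z ∈ pentagon a s ↔
      |z 0| ≤ a ∧ -1 / 2 ≤ z 1 ∧ a * z 1 + (s ^ 2 - 1) / 2 * |z 0| ≤ a * (s / 2) := by
  rw [pentagon, mem_house ha (pentagon_base_le_wall hs1 hs2) (pentagon_wall_le_apex hs1),
    show s / 2 - (-s ^ 2 + s + 1) / 2 = (s ^ 2 - 1) / 2 by ring]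

lemma isConvexBody_pentagon (ha : 0 < a) (hs1 : 1 ≤ s) (hs2 : s ≤ 2) :
    IsConvexBody (pentagon a s) :=
  isConvexBody_house ha (pentagon_base_le_wall hs1 hs2) (pentagon_wall_le_apex hs1) (by linarith)

lemma pentagon_subset_smul_neg (ha : 0 < a) (hs1 : 1 ≤ s) (hs2 : s ≤ 2) :
    pentagon a s ⊆ s • (-pentagon a s) := by
  have hs : 0 < s := by linarith
  intro z hz
  obtain ⟨hwalls, hbase, hroof⟩ := (mem_pentagon ha hs1 hs2).1 hz
  have hslope : 0 ≤ (s ^ 2 - 1) / 2 := by nlinarith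
  have hz_le : z 1 ≤ s / 2 := by
    have : 0 ≤ (s ^ 2 - 1) / 2 * |z 0| := by positivity
    exact le_of_mul_le_mul_left (by linarith) ha
  rw [mem_smul_set_iff_inv_smul_mem₀ hs.ne', mem_neg, mem_pentagon ha hs1 hs2]
  simp only [PiLp.neg_apply, PiLp.smul_apply, smul_eq_mul, abs_neg, abs_mul, abs_inv,
    abs_of_pos hs]
  refine ⟨?_, ?_, ?_⟩
  · rw [inv_mul_le_iff₀ hs]
    nlinarith
  · have : s⁻¹ * z 1 ≤ 1 / 2 := by
      rw [inv_mul_le_iff₀ hs]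
      linarith
    linarith
  · calc a * -(s⁻¹ * z 1) + (s ^ 2 - 1) / 2 * (s⁻¹ * |z 0|)
        = s⁻¹ * (a * -z 1 + (s ^ 2 - 1) / 2 * |z 0|) := by ring
      _ ≤ s⁻¹ * (a * (1 / 2) + (s ^ 2 - 1) / 2 * a) := by
        gcongr
        linarith
      _ = a * (s / 2) := by
        field_simp
        ring

lemma facet_bounds_of_mem_pentagon (ha : 0 < a) (hs1 : 1 ≤ s) (hs2 : s ≤ 2) {z : E2}
    (hz : z ∈ pentagon a s) :
    -a ≤ 2 * a * z 1 ∧ -(a * (s / 2)) ≤ (s ^ 2 - 1) / 2 * z 0 - a * z 1 ∧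
      -(a * (s / 2)) ≤ -((s ^ 2 - 1) / 2) * z 0 - a * z 1 := by
  obtain ⟨-, hbase, hroof⟩ := (mem_pentagon ha hs1 hs2).1 hz
  have hslope : 0 ≤ (s ^ 2 - 1) / 2 := by nlinarith
  have hright := mul_le_mul_of_nonneg_left (le_abs_self (z 0)) hslope
  have hleft := mul_le_mul_of_nonneg_left (neg_abs_le (z 0)) hslope
  exact ⟨by nlinarith, by linarith, by linarith⟩

lemma minkAsym_pentagon (ha : 0 < a) (hs1 : 1 ≤ s) (hs2 : s ≤ 2) :
    minkAsym (pentagon a s) = s := by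
  let x : Module.Dual ℝ E2 := EuclideanSpace.proj (𝕜 := ℝ) (0 : Fin 2)
  let y : Module.Dual ℝ E2 := EuclideanSpace.proj (𝕜 := ℝ) (1 : Fin 2)
  have apex_mem : pt 0 (s / 2) ∈ pentagon a s := subset_convexHull ℝ _ (by simp)
  have base_right_mem : pt a (-1 / 2) ∈ pentagon a s := subset_convexHull ℝ _ (by simp)
  have base_left_mem : pt (-a) (-1 / 2) ∈ pentagon a s := subset_convexHull ℝ _ (by simp)
  refine minkAsym_eq_of_touching
    (f := ![(2 * a) • y, ((s ^ 2 - 1) / 2) • x - a • y, -((s ^ 2 - 1) / 2) • x - a • y])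
    (p := ![pt 0 (s / 2), pt a (-1 / 2), pt (-a) (-1 / 2)]) (m := ![a, a * (s / 2), a * (s / 2)])
    (by linarith) (pentagon_subset_smul_neg ha hs1 hs2) ?_ ?_ ?_ ?_ ?_
  · rw [Fin.sum_univ_three]
    simp only [Matrix.cons_val]
    module
  · intro i
    fin_cases i
    exacts [apex_mem, base_right_mem, base_left_mem]
  · intro i z hz
    obtain ⟨hbase, hright, hleft⟩ := facet_bounds_of_mem_pentagon ha hs1 hs2 hz
    fin_cases i
    exacts [hbase, hright, hleft]
  · intro i
    fin_cases i <;> simp [x, y] <;> ring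
  · rw [Fin.sum_univ_three]
    simp only [Matrix.cons_val]
    positivity

lemma minkCentered_pentagon (ha : 0 < a) (hs1 : 1 ≤ s) (hs2 : s ≤ 2) :
    MinkCentered (pentagon a s) := by
  rw [MinkCentered, minkAsym_pentagon ha hs1 hs2]
  exact pentagon_subset_smul_neg ha hs1 hs2

lemma pt_mem_pentagon_inter_neg (ha : 0 < a) (hs1 : 1 ≤ s) (hs2 : s ≤ 2) {τ : ℝ} (hτ0 : 0 ≤ τ)
    (hτ1 : τ ≤ 1) (hτs : τ * (s ^ 2 - 1) ≤ s) :
    pt (τ * a) 0 ∈ pentagon a s ∩ -pentagon a s := by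
  have hwalls : |τ * a| ≤ a := by
    rw [abs_of_nonneg (by positivity)]
    exact mul_le_of_le_one_left ha.le hτ1
  have hroof : (s ^ 2 - 1) / 2 * |τ * a| ≤ a * (s / 2) := by
    rw [abs_of_nonneg (by positivity)]
    nlinarith
  rw [mem_inter_iff, mem_neg, mem_pentagon ha hs1 hs2, mem_pentagon ha hs1 hs2]
  simp only [PiLp.neg_apply, pt_apply_zero, pt_apply_one, neg_zero, abs_neg, mul_zero, zero_add]
  exact ⟨⟨hwalls, by norm_num, hroof⟩, ⟨hwalls, by norm_num, hroof⟩⟩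

lemma tauB_pentagon_eq_of_subset (ha : 0 < a) (hs1 : 1 ≤ s) (hs2 : s ≤ 2) {τ : ℝ} (hτ0 : 0 < τ)
    (hτ1 : τ ≤ 1) (hτs : τ * (s ^ 2 - 1) ≤ s)
    (hsub : pentagon a s ∩ -pentagon a s ⊆ τ • ((2 : ℝ)⁻¹ • (pentagon a s - pentagon a s))) :
    tauB (pentagon a s) = τ :=
  tauB_eq_of_touching hτ0 hsub (pt_mem_pentagon_inter_neg ha hs1 hs2 hτ0.le hτ1 hτs)
    (f := EuclideanSpace.proj (𝕜 := ℝ) (0 : Fin 2)) ha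
    (fun _ hx ↦ ((mem_pentagon ha hs1 hs2).1 hx).1) (by simp)

lemma pentagon_inter_neg_subset_smul (ha : 0 < a) (hs1 : 1 ≤ s) (hs2 : s ≤ 2) {τ : ℝ}
    (hτ0 : 0 < τ) (hτs : τ * (s ^ 2 - 1) = s) :
    pentagon a s ∩ -pentagon a s ⊆ τ • ((2 : ℝ)⁻¹ • (pentagon a s - pentagon a s)) := by
  have hbt := pentagon_base_le_wall hs1 hs2
  have hth := pentagon_wall_le_apex hs1
  have hs : 1 < s := hs1.lt_of_ne (by rintro rfl; norm_num at hτs)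
  have hτ2 : 2 ≤ τ * (s + 1) := by
    refine le_of_mul_le_mul_right ?_ (sub_pos.2 hs)
    linarith
  intro z hz
  obtain ⟨-, hz₁, hroof⟩ := abs_le_of_mem_house_inter_neg ha hbt hth hz
  have hz₀ : |z 0| ≤ τ * a := by
    refine le_of_mul_le_mul_left ?_ (show 0 < s ^ 2 - 1 by nlinarith)
    nlinarith [mul_nonneg ha.le (abs_nonneg (z 1))]
  rw [mem_smul_set_iff_inv_smul_mem₀ hτ0.ne']
  apply mem_half_sub_house ha hbt hth <;>
    simp only [PiLp.smul_apply, smul_eq_mul, abs_mul, abs_inv, abs_of_pos hτ0]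
  · rwa [inv_mul_le_iff₀ hτ0]
  · rw [inv_mul_le_iff₀ hτ0]
    linarith
  · rw [mul_left_comm a, mul_left_comm (s / 2 - _), ← mul_add, inv_mul_le_iff₀ hτ0]
    refine hroof.trans ?_
    have : a * s * 2 ≤ a * s * (τ * (s + 1)) := by gcongr
    linarith

lemma tauB_pentagon_of_sq_sub_one_le (ha : 0 < a) (hs1 : 1 ≤ s) (hs : s ^ 2 - 1 ≤ s) :
    tauB (pentagon a s) = 1 := by
  have hs2 : s ≤ 2 := by nlinarith
  refine tauB_pentagon_eq_of_subset ha hs1 hs2 one_pos le_rfl (by rwa [one_mul]) ?_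
  rw [one_smul]
  exact inter_neg_subset_half_sub _

lemma tauB_pentagon_of_le_sq_sub_one (ha : 0 < a) (hs1 : 1 ≤ s) (hs2 : s ≤ 2)
    (hs : s ≤ s ^ 2 - 1) : tauB (pentagon a s) = s / (s ^ 2 - 1) := by
  have hpos : 0 < s ^ 2 - 1 := by linarith
  have hτ0 : 0 < s / (s ^ 2 - 1) := by positivity
  have hτs : s / (s ^ 2 - 1) * (s ^ 2 - 1) = s := div_mul_cancel₀ s hpos.ne'
  exact tauB_pentagon_eq_of_subset ha hs1 hs2 hτ0 ((div_le_one hpos).2 hs) hτs.le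
    (pentagon_inter_neg_subset_smul ha hs1 hs2 hτ0 hτs)

lemma tauB_pentagon (ha : 0 < a) (hs1 : 1 ≤ s) (hs2 : s ≤ 2) :
    tauB (pentagon a s) = if s = 1 then 1 else min 1 (s / (s ^ 2 - 1)) := by
  split_ifs with h
  · exact tauB_pentagon_of_sq_sub_one_le ha hs1 (by norm_num [h])
  have hpos : 0 < s ^ 2 - 1 := by nlinarith [hs1.lt_of_ne' h]
  rcases le_total (s ^ 2 - 1) s with hs | hs
  · rw [tauB_pentagon_of_sq_sub_one_le ha hs1 hs, min_eq_left ((one_le_div hpos).2 hs)]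
  · rw [tauB_pentagon_of_le_sq_sub_one ha hs1 hs2 hs, min_eq_right ((div_le_one hpos).2 hs)]

theorem stmt19_general (ha : 0 < a) (hs1 : 1 ≤ s) (hs2 : s ≤ 2) :
    IsConvexBody (pentagon a s) ∧ MinkCentered (pentagon a s) ∧ minkAsym (pentagon a s) = s ∧
      tauB (pentagon a s) = if s = 1 then 1 else min 1 (s / (s ^ 2 - 1)) :=
  ⟨isConvexBody_pentagon ha hs1 hs2, minkCentered_pentagon ha hs1 hs2,
    minkAsym_pentagon ha hs1 hs2, tauB_pentagon ha hs1 hs2⟩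

end Pentagon

theorem stmt19 (s : ℝ) (hs1 : 1 ≤ s) (hs2 : s ≤ 2) :
    (let P : Set E2 := convexHull ℝ
        {pt 0 (s / 2),
         pt ((2 * s - 1) / (2 * Real.sqrt 3)) (-1 / 2),
         pt (-((2 * s - 1) / (2 * Real.sqrt 3))) (-1 / 2),
         pt ((2 * s - 1) / (2 * Real.sqrt 3)) ((-s ^ 2 + s + 1) / 2),
         pt (-((2 * s - 1) / (2 * Real.sqrt 3))) ((-s ^ 2 + s + 1) / 2)}
     IsConvexBody P ∧ MinkCentered P ∧ minkAsym P = s ∧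
       tauB P = if s = 1 then 1 else min 1 (s / (s ^ 2 - 1))) := by
  have hwidth : 0 < 2 * s - 1 := by linarith
  exact stmt19_general (by positivity) hs1 hs2
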